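/- Let k₁, k₂ > 0 with k₂−k₁+1/2 < 0, t ∈ ℝ, 0 < φ < π. Set ρ_n = i(k₂−k₁+1/2+n), and let n₀ be the largest nonnegative integer with k₂−k₁+1/2+n₀ < 0. Then for all m, n ∈ {0, …, n₀}: ∫_ℝ φ_{ρ_n}(x) φ_{ρ_m}*(x) w(x) dx = δ_{nm} · e^{2t(φ−π/2)} · (Γ(2k₂)Γ(2k₁−2k₂−1)/(Γ(k₁−k₂+it)Γ(k₁−k₂−it)Γ(2k₁−1))) · (n! (2k₂−2k₁+n+1)ₙ (2−2k₁)ₙ)/((2k₂)ₙ (2k₂−2k₁+2)_{2n}). -/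

import Mathlib

noncomputable section

open MeasureTheory Filter Topology Set Asymptotics ComplexConjugate
open Complex (I)

/-- Pochhammer symbol `(a)ₙ = a(a+1)⋯(a+n-1)`. -/
def poch (a : ℂ) (n : ℕ) : ℂ := ∏ k ∈ Finset.range n, (a + k)

/-- Generalized hypergeometric series `ₚF_q(a; b; z)` as a sum. -/
def pFq (a b : List ℂ) (z : ℂ) : ℂ :=
  ∑' n : ℕ, ((a.map fun c => poch c n).prod / (b.map fun c => poch c n).prod) * z ^ n /
    (n.factorial : ℂ)

def F32 (a b c d e z : ℂ) : ℂ := pFq [a, b, c] [d, e] z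

/-- The weight function `w(z)`. -/
def wfun (k₁ k₂ t φ : ℝ) (z : ℂ) : ℂ :=
  ((1 / (2 * Real.pi) : ℝ) : ℂ) *
    Complex.exp ((2 * z + (t : ℂ)) * (2 * (φ : ℂ) - (Real.pi : ℂ))) *
    Complex.Gamma ((k₁ : ℂ) + I * t + I * z) * Complex.Gamma ((k₁ : ℂ) - I * t - I * z) *
    Complex.Gamma ((k₂ : ℂ) + I * z) * Complex.Gamma ((k₂ : ℂ) - I * z)

/-- The `i`-periodic function `p(z) = (1/π) e^{πz} sin(π(k₁ − it − iz))`. -/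
def pper (k₁ t : ℝ) (z : ℂ) : ℂ :=
  (1 / (Real.pi : ℂ)) * Complex.exp ((Real.pi : ℂ) * z) *
    Complex.sin ((Real.pi : ℂ) * ((k₁ : ℂ) - I * t - I * z))

/-- The continuous Hahn function `φ_ρ`. -/
def phiC (k₁ k₂ t φ : ℝ) (ρ : ℂ) (z : ℂ) : ℂ :=
  Complex.exp (-2 * (φ : ℂ) * z) * pper k₁ t z *
    (Complex.Gamma (1 - (k₁ : ℂ) + I * t + I * z) / Complex.Gamma ((k₁ : ℂ) + I * z + I * t)) *
    F32 ((k₂ : ℂ) - I * z) ((k₂ : ℂ) - (k₁ : ℂ) + 1/2 + I * ρ)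
      ((k₂ : ℂ) - (k₁ : ℂ) + 1/2 - I * ρ) (2 * (k₂ : ℂ)) ((k₂ : ℂ) - (k₁ : ℂ) + I * t + 1) 1

/-- The discrete mass point `ρ_n = i(k₂ − k₁ + 1/2 + n)`. -/
def rhoD (k₁ k₂ : ℝ) (n : ℕ) : ℂ := I * ((k₂ : ℂ) - k₁ + 1/2 + n)

open scoped FourierTransform

lemma fourier_L2_ae {f : ℝ → ℂ} (h1 : Integrable f) (h2 : MemLp f 2) :
    ((𝓕 (h2.toLp f) : Lp (α := ℝ) ℂ 2 volume) : ℝ → ℂ) =ᵐ[volume] 𝓕 f := by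
  have hc : Continuous (𝓕 f) := by
    exact VectorFourier.fourierIntegral_continuous Real.continuous_fourierChar
      (by exact continuous_inner) h1
  refine ae_eq_of_integral_contDiff_smul_eq ?_ hc.locallyIntegrable ?_
  · exact (Lp.memLp _).locallyIntegrable (by norm_num)
  intro g hg hgs
  have hcs : HasCompactSupport (fun x => (g x : ℂ)) := hgs.comp_left (g := fun x : ℝ => (x:ℂ)) (by simp)
  have hcd : ContDiff ℝ ((⊤ : ℕ∞) : WithTop ℕ∞) (fun x => (g x : ℂ)) := Complex.ofRealCLM.contDiff.comp hg
  set G := hcs.toSchwartzMap hcd with hG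
  have key := congrArg (fun T => T G) (Lp.fourier_toTemperedDistribution_eq (h2.toLp f))
  simp only [TemperedDistribution.fourier_apply, Lp.toTemperedDistribution_apply] at key
  have e1 : ∫ x, g x • ((𝓕 (h2.toLp f) : Lp (α := ℝ) ℂ 2 volume) : ℝ → ℂ) x = ∫ x, (G x) • ((𝓕 (h2.toLp f) : Lp (α := ℝ) ℂ 2 volume) : ℝ → ℂ) x := by
    congr with x
  rw [e1, ← key]
  have e2 : ∫ x, (𝓕 G) x • (h2.toLp f) x = ∫ x, (𝓕 G) x • f x := by
    apply integral_congr_ae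
    filter_upwards [h2.coeFn_toLp] with x hx
    rw [hx]
  rw [e2]
  have := VectorFourier.integral_fourierIntegral_smul_eq_flip (μ := volume) (ν := volume) (L := innerₗ ℝ) (e := Real.fourierChar) (f := G) (g := f) Real.continuous_fourierChar
      (by exact continuous_inner) (G.integrable) h1
  rw [SchwartzMap.fourier_coe]
  refine this.trans ?_
  congr with x
  rw [flip_innerₗ]
  simp [hG, Real.fourier_eq]
  left; rfl

lemma plancherel {f g : ℝ → ℂ} (f1 : Integrable f) (f2 : MemLp f 2) (g1 : Integrable g) (g2 : MemLp g 2) :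
    Integrable (fun x => 𝓕 f x * conj (𝓕 g x)) ∧
    ∫ x, 𝓕 f x * conj (𝓕 g x) = ∫ x, f x * conj (g x) := by
  have hf := fourier_L2_ae f1 f2
  have hg := fourier_L2_ae g1 g2
  constructor
  · have a := L2.integrable_inner (𝕜 := ℂ) (𝓕 (g2.toLp g) : Lp (α := ℝ) ℂ 2 volume) (𝓕 (f2.toLp f))
    refine a.congr ?_
    filter_upwards [hf, hg] with x hx hy
    rw [hx, hy]; simp 
  · have a := Lp.inner_fourier_eq (g2.toLp g) (f2.toLp f)
    rw [L2.inner_def, L2.inner_def] at a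
    convert a using 1
    · apply integral_congr_ae
      filter_upwards [hf, hg] with x hx hy
      rw [hx, hy]; simp 
    · apply integral_congr_ae
      filter_upwards [f2.coeFn_toLp, g2.coeFn_toLp] with x hx hy
      rw [hx, hy]; simp 

def hB (v : ℂ) : ℝ → ℂ := indicator (Ioo (0:ℝ) 1) (fun s => (1-(s:ℂ))^(v-1))
def gB (a : ℝ) (v : ℂ) (u : ℝ) : ℂ := Real.exp (-a*u) • hB v (Real.exp (-u))

lemma mellin_hB (v s : ℂ) : mellin (hB v) s = Complex.betaIntegral s v := by
  rw [mellin, Complex.betaIntegral, intervalIntegral.integral_of_le zero_le_one,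
    integral_Ioc_eq_integral_Ioo, ← integral_indicator measurableSet_Ioo,
    ← integral_indicator measurableSet_Ioi]
  congr with x
  by_cases hx : x ∈ Ioo (0:ℝ) 1
  · simp [hB, hx, hx.1]
  · simp [hB, hx]

lemma mellinConv_hB {v s : ℂ} (hs : 0 < s.re) (hv : 0 < v.re) : MellinConvergent (hB v) s := by
  have h := Complex.betaIntegral_convergent hs hv
  rw [intervalIntegrable_iff_integrableOn_Ioo_of_le zero_le_one] at h
  have h2 := (integrable_indicator_iff measurableSet_Ioo).2 h
  refine (h2.congr (Eventually.of_forall fun x => ?_)).integrableOn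
  by_cases hx : x ∈ Ioo (0:ℝ) 1 <;> simp [hB, hx]

lemma integrable_gB {a : ℝ} {v : ℂ} (ha : 0 < a) (hv : 0 < v.re) : Integrable (gB a v) := by
  have hf := mellinConv_hB (s := a) (by simpa using ha) hv
  have d1 : ∀ x ∈ univ, HasDerivWithinAt (Real.exp ∘ Neg.neg) (-Real.exp (-x)) univ x :=
    fun x _ ↦ mul_neg_one (Real.exp (-x)) ▸
      ((Real.hasDerivAt_exp (-x)).comp x (hasDerivAt_neg x)).hasDerivWithinAt
  have d2 : Real.exp ∘ Neg.neg '' univ = Ioi 0 := by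
    rw [Set.image_comp, Set.image_univ_of_surjective neg_surjective, Set.image_univ, Real.range_exp]
  have d3 : univ.InjOn (Real.exp ∘ Neg.neg) :=
    Real.exp_injective.injOn.comp neg_injective.injOn (univ.mapsTo_univ _)
  rw [MellinConvergent, ← d2, integrableOn_image_iff_integrableOn_abs_deriv_smul
      MeasurableSet.univ d1 d3] at hf
  rw [integrableOn_univ] at hf
  refine hf.congr (Eventually.of_forall fun x => ?_)
  simp only [gB, abs_neg, abs_of_pos (Real.exp_pos _), Function.comp]
  rw [Complex.real_smul, Complex.real_smul, smul_eq_mul, ← mul_assoc]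
  congr 1
  have : ((Real.exp (-x) : ℝ) : ℂ) ^ ((a:ℂ) - 1) = ((Real.exp (-x) ^ (a - 1) : ℝ) : ℂ) := by
    rw [Complex.ofReal_cpow (Real.exp_pos _).le]; push_cast; rfl
  rw [this, ← Real.exp_mul, ← Complex.ofReal_mul, ← Real.exp_add]
  congr 2
  ring

lemma gB_mul (a b : ℝ) (v v' : ℂ) (u : ℝ) :
    gB a v u * conj (gB b v' u) = gB (a+b) (v + conj v' - 1) u := by
  simp only [gB, hB]
  by_cases hx : Real.exp (-u) ∈ Ioo (0:ℝ) 1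
  · simp only [indicator_of_mem hx]
    have h1 : (1 - (Real.exp (-u) : ℂ)) = ((1 - Real.exp (-u) : ℝ) : ℂ) := by push_cast; ring
    have h0 : (0:ℝ) < 1 - Real.exp (-u) := by linarith [hx.2]
    have h2 : conj ((1 - (Real.exp (-u) : ℂ)) ^ (v' - 1)) = (1 - (Real.exp (-u) : ℂ)) ^ (conj v' - 1) := by
      rw [h1, show conj v' - 1 = conj (v' - 1) by simp,
        Complex.cpow_conj _ _ (by rw [Complex.arg_ofReal_of_nonneg h0.le]; exact Real.pi_pos.ne),
        Complex.conj_ofReal]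
    have h3 : (1 - (Real.exp (-u) : ℂ)) ^ (v + conj v' - 1 - 1) =  (1 - (Real.exp (-u) : ℂ)) ^ (v-1) * (1 - (Real.exp (-u) : ℂ)) ^ (conj v' - 1) := by
      rw [← Complex.cpow_add]
      · congr 1; ring
      · rw [h1]; exact_mod_cast h0.ne'
    rw [h3, Complex.real_smul, Complex.real_smul, Complex.real_smul, map_mul, h2, Complex.conj_ofReal]
    have : Real.exp (-(a+b)*u) = Real.exp (-a*u) * Real.exp (-b*u) := by
      rw [← Real.exp_add]; ring_nf
    rw [this]; push_cast; ring
  · simp [indicator_of_notMem hx]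

lemma memLp_gB {a : ℝ} {v : ℂ} (ha : 0 < a) (hv : 1/2 < v.re) : MemLp (gB a v) 2 := by
  rw [memLp_two_iff_integrable_sq_norm (integrable_gB ha (by linarith)).aestronglyMeasurable]
  have := (integrable_gB (a := a + a) (v := v + conj v - 1) (by linarith) (by simp; linarith)).norm
  refine this.congr (Eventually.of_forall fun x => ?_)
  simp only
  rw [← gB_mul, norm_mul, RCLike.norm_conj]; ring

lemma fourier_gB (a : ℝ) (v : ℂ) (x : ℝ) :
    𝓕 (gB a v) (x / (2 * Real.pi)) = Complex.betaIntegral (a + I * x) v := by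
  rw [← mellin_hB, mellin_eq_fourier]
  have h1 : ((a:ℂ) + I * x).re = a := by simp
  have h2 : ((a:ℂ) + I * x).im = x := by simp
  rw [h1, h2]
  rfl

lemma integral_gB (a : ℝ) (v : ℂ) : ∫ u, gB a v u = Complex.betaIntegral a v := by
  have := fourier_gB a v 0
  simp [Real.fourier_eq] at this
  exact this

lemma barnes {a b : ℝ} {v v' : ℂ} (ha : 0 < a) (hb : 0 < b) (hv : 1/2 < v.re) (hv' : 1/2 < v'.re) :
    Integrable (fun x : ℝ => Complex.betaIntegral (a + I * x) v * conj (Complex.betaIntegral (b + I * x) v')) ∧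
    ∫ x : ℝ, Complex.betaIntegral (a + I * x) v * conj (Complex.betaIntegral (b + I * x) v')
      = 2 * Real.pi * Complex.betaIntegral (a + b) (v + conj v' - 1) := by
  have h := plancherel (integrable_gB ha (by linarith)) (memLp_gB ha hv)
    (integrable_gB hb (by linarith)) (memLp_gB hb hv')
  have hpi : (2 * Real.pi) ≠ 0 := by positivity
  simp_rw [← fourier_gB]
  constructor
  · exact h.1.comp_div hpi
  · rw [Measure.integral_comp_div (fun y => 𝓕 (gB a v) y * conj (𝓕 (gB b v') y)), h.2]
    simp_rw [gB_mul]
    rw [integral_gB, abs_of_pos (by positivity)]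
    simp

lemma poch_zero (a : ℂ) : poch a 0 = 1 := by simp [poch]
lemma poch_succ (a : ℂ) (n : ℕ) : poch a (n+1) = poch a n * (a + n) := by
  simp [poch, Finset.prod_range_succ]
lemma poch_add (a : ℂ) (m n : ℕ) : poch a (m+n) = poch a m * poch (a+m) n := by
  simp only [poch, Finset.prod_range_add]
  congr 1
  apply Finset.prod_congr rfl
  intros; push_cast; ring
lemma poch_succ' (a : ℂ) (n : ℕ) : poch a (n+1) = a * poch (a+1) n := by
  rw [add_comm, poch_add, poch_succ, poch_zero]; simp
lemma poch_ne {a : ℂ} {n : ℕ} (h : ∀ i < n, a + i ≠ 0) : poch a n ≠ 0 := by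
  rw [poch, Finset.prod_ne_zero_iff]
  intro i hi; exact h i (Finset.mem_range.1 hi)
lemma poch_refl (w : ℂ) (j : ℕ) : poch (w - j) j = (-1)^j * poch (1-w) j := by
  rw [poch, poch, ← Finset.prod_range_reflect, ← Finset.card_range j, ← Finset.prod_const, 
    Finset.card_range, ← Finset.prod_mul_distrib]
  apply Finset.prod_congr rfl
  intro i hi
  have := Finset.mem_range.1 hi
  rw [Nat.sub_sub, Nat.cast_sub (by omega)]; push_cast; ring
lemma poch_conj (a : ℂ) (n : ℕ) : conj (poch a n) = poch (conj a) n := by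
  simp [poch, map_prod]
lemma poch_Gamma {a : ℂ} (ha : 0 < a.re) (n : ℕ) : Complex.Gamma (a + n) = poch a n * Complex.Gamma a := by
  induction n with
  | zero => simp [poch_zero]
  | succ n ih =>
    rw [poch_succ]
    push_cast
    rw [← add_assoc, Complex.Gamma_add_one, ih]
    · ring
    · intro h
      have := congrArg Complex.re h
      simp at this
      have : (0:ℝ) ≤ n := by positivity
      linarith
lemma poch_neg_nat (m l : ℕ) : poch (-(m:ℂ)) l = (-1)^l * m.choose l * l.factorial := by
  induction l with
  | zero => simp [poch_zero]
  | succ l ih =>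
    rw [poch_succ, ih, Nat.factorial_succ]
    have h : ((m.choose (l+1) : ℂ) * (l+1)) = m.choose l * ((m:ℂ) - l) := by
      rcases le_or_gt l m with h | h
      · have := Nat.choose_succ_right_eq m l
        rw [← Nat.cast_sub h]
        exact_mod_cast this
      · simp [Nat.choose_eq_zero_of_lt h, Nat.choose_eq_zero_of_lt (Nat.lt_succ_of_lt h)]
    push_cast
    linear_combination (-(-1)^(l+1) * (l.factorial : ℂ)) * h
open fwdDiff

lemma sum_eq_fwd (f : ℂ → ℂ) (m : ℕ) (y : ℂ) :
    ∑ l ∈ Finset.range (m+1), (-1:ℂ)^l * m.choose l * f (y + l) = (-1)^m * ((fwdDiff (1:ℂ))^[m] f) y := by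
  rw [fwdDiff_iter_eq_sum_shift, Finset.mul_sum]
  apply Finset.sum_congr rfl
  intro l hl
  have hl' : l ≤ m := by have := Finset.mem_range.1 hl; omega
  obtain ⟨k, rfl⟩ := Nat.exists_eq_add_of_le hl'
  simp only [zsmul_eq_mul]
  push_cast
  simp only [nsmul_eq_mul, mul_one, Nat.add_sub_cancel_left]
  have : ((-1:ℂ)^k)*(-1)^k = 1 := by rw [← mul_pow]; simp
  linear_combination (-(-1:ℂ)^l * ((l+k).choose l : ℂ) * f (y + l)) * this

lemma fwd_inv (m : ℕ) : ∀ y : ℂ, (∀ i ≤ m, y + (i:ℂ) ≠ 0) → 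
    ((fwdDiff (1:ℂ))^[m] (fun z : ℂ => z⁻¹)) y = (-1)^m * m.factorial / poch y (m+1) := by
  induction m with
  | zero => intro y h; simp [poch]
  | succ m ih =>
    intro y h
    rw [Function.iterate_succ_apply', fwdDiff, ih, ih]
    · have e1 : poch y (m+1+1) = y * poch (y+1) m * (y + 1 + m) := by
        rw [poch_succ', poch_succ]; ring
      have e2 : poch y (m+1) = y * poch (y+1) m := poch_succ' _ _
      have e3 : poch (y+1) (m+1) = poch (y+1) m * (y + 1 + m) := poch_succ _ _
      have h1 : y ≠ 0 := by simpa using h 0 (by omega)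
      have h2 : y + 1 + m ≠ 0 := by have := h (m+1) (by omega); push_cast at this; convert this using 1; ring
      have h3 : poch (y+1) m ≠ 0 := poch_ne fun i hi => by
        have := h (i+1) (by omega); push_cast at this; convert this using 1; ring
      rw [e1, e2, e3, Nat.factorial_succ]
      field_simp
      push_cast
      ring
    · intro i hi; exact h i (by omega)
    · intro i hi
      have := h (i+1) (by omega); push_cast at this; convert this using 1; ring

open Polynomial in
/-- polynomial `z ↦ (a+z)_n`. -/
def pochP (a : ℂ) (n : ℕ) : ℂ[X] := ∏ k ∈ Finset.range n, (X + C (a + k))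
lemma pochP_eval (a z : ℂ) (n : ℕ) : (pochP a n).eval z = poch (a + z) n := by
  simp only [pochP, poch, Polynomial.eval_prod]
  apply Finset.prod_congr rfl
  intros; simp; ring
lemma pochP_deg (a : ℂ) (n : ℕ) : (pochP a n).natDegree = n := by
  rw [pochP, Polynomial.natDegree_prod_of_monic _ _ (fun i _ => Polynomial.monic_X_add_C _)]
  simp only [Polynomial.natDegree_X_add_C]; simp

lemma sum_poly_zero (P : Polynomial ℂ) (m : ℕ) (h : P.natDegree < m) :
    ∑ l ∈ Finset.range (m+1), (-1:ℂ)^l * m.choose l * P.eval (l:ℂ) = 0 := by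
  have := sum_eq_fwd (fun z => P.eval z) m 0
  simp only [zero_add] at this
  rw [this, Polynomial.fwdDiff_iter_eq_zero_of_degree_lt h]; simp

lemma sum_poly_div (P : Polynomial ℂ) (m : ℕ) (h : P.natDegree ≤ m) (x : ℂ)
    (hx : ∀ i ≤ m, x + (i:ℂ) ≠ 0) :
    ∑ l ∈ Finset.range (m+1), (-1:ℂ)^l * m.choose l * (P.eval (l:ℂ) / (x + l))
      = m.factorial * P.eval (-x) / poch x (m+1) := by
  have h1 : ∑ l ∈ Finset.range (m+1), (-1:ℂ)^l * m.choose l * (x + l)⁻¹ = m.factorial / poch x (m+1) := by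
    rw [sum_eq_fwd (fun z => z⁻¹) m x, fwd_inv m x hx]
    have : ((-1:ℂ)^m)*(-1)^m = 1 := by rw [← mul_pow]; simp
    linear_combination (m.factorial / poch x (m+1)) * this
  set Q := P /ₘ (Polynomial.X - Polynomial.C (-x)) with hQ
  have hP : P = Polynomial.C (P.eval (-x)) + (Polynomial.X - Polynomial.C (-x)) * Q := by
    have := Polynomial.modByMonic_add_div P (Polynomial.X - Polynomial.C (-x))
    rw [Polynomial.modByMonic_X_sub_C_eq_C_eval] at this
    exact this.symm
  have hQ0 : ∑ l ∈ Finset.range (m+1), (-1:ℂ)^l * m.choose l * Q.eval (l:ℂ) = 0 := by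
    rcases Nat.eq_zero_or_pos m with hm | hm
    · subst hm
      have : Q = 0 := by
        rw [hQ, Polynomial.divByMonic_eq_zero_iff (Polynomial.monic_X_sub_C _)]
        rw [Polynomial.degree_X_sub_C]
        exact lt_of_le_of_lt (Polynomial.degree_le_natDegree) (by exact_mod_cast Nat.lt_one_iff.2 (Nat.le_zero.1 h))
      simp [this]
    · apply sum_poly_zero
      rw [hQ, Polynomial.natDegree_divByMonic _ (Polynomial.monic_X_sub_C _)]
      simp; omega
  have : ∀ l ∈ Finset.range (m+1), (-1:ℂ)^l * m.choose l * (P.eval (l:ℂ) / (x + l)) =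
      P.eval (-x) * ((-1:ℂ)^l * m.choose l * (x + l)⁻¹) + (-1:ℂ)^l * m.choose l * Q.eval (l:ℂ) := by
    intro l hl
    have hl' := hx l (by have := Finset.mem_range.1 hl; omega)
    have e := congrArg (Polynomial.eval (l:ℂ)) hP
    simp at e
    rw [e]
    field_simp
    ring
  rw [Finset.sum_congr rfl this, Finset.sum_add_distrib, ← Finset.mul_sum, h1, hQ0]
  ring

/-- coefficients -/
def Bc (K N : ℂ) (m l : ℕ) : ℂ := poch (-(m:ℂ)) l * poch (N + m) l / (poch K l * l.factorial)

def Tsum (K N : ℂ) (n m : ℕ) : ℂ := ∑ j ∈ Finset.range (n+1), ∑ l ∈ Finset.range (m+1),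
  Bc K N n j * Bc K N m l * (poch K (j+l) / poch (N+1) (j+l))

lemma Tsum_symm (K N : ℂ) (n m : ℕ) : Tsum K N n m = Tsum K N m n := by
  rw [Tsum, Finset.sum_comm, Tsum]
  refine Finset.sum_congr rfl fun j _ => Finset.sum_congr rfl fun l _ => ?_
  rw [add_comm l j]; ring

lemma Bc_term (K N : ℂ) (hK : ∀ i : ℕ, K + i ≠ 0) (m j l : ℕ) :
    Bc K N m l * (poch K (j+l) / poch (N+1) (j+l)) = 
      (-1:ℂ)^l * m.choose l * (poch (K + l) j * (poch (N+m) l / poch (N+1) (j+l))) := by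
  have h1 : poch K l ≠ 0 := poch_ne fun i _ => hK i
  have h2 : (l.factorial : ℂ) ≠ 0 := by exact_mod_cast l.factorial_ne_zero
  rw [Bc, poch_neg_nat, add_comm j l, poch_add K l j]
  field_simp

lemma inner_zero (K N : ℂ) (hK : ∀ i : ℕ, K + i ≠ 0) (m j : ℕ) (hj : j < m)
    (hN : ∀ i ≤ j + m, N + i ≠ 0) :
    ∑ l ∈ Finset.range (m+1), Bc K N m l * (poch K (j+l) / poch (N+1) (j+l)) = 0 := by
  have : ∀ l ∈ Finset.range (m+1), Bc K N m l * (poch K (j+l) / poch (N+1) (j+l)) =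
      (poch (N+1) (m-1))⁻¹ * ((-1:ℂ)^l * m.choose l * (pochP K j * pochP (N+1+j) (m-1-j)).eval (l:ℂ)) := by
    intro l hl
    have hl' : l ≤ m := by have := Finset.mem_range.1 hl; omega
    rw [Bc_term K N hK, Polynomial.eval_mul, pochP_eval, pochP_eval]
    have hne : poch (N+1) (j+l) ≠ 0 := poch_ne fun i hi => by
      have := hN (i+1) (by omega); push_cast at this; convert this using 1; ring
    have hne2 : poch (N+1) (m-1) ≠ 0 := poch_ne fun i hi => by
      have := hN (i+1) (by omega); push_cast at this; convert this using 1; ring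
    have e1 : poch (N+1) (m-1) * poch (N+m) l = poch (N+1) (m-1+l) := by
      rw [poch_add]; congr 2; rw [Nat.cast_sub (by omega)]; push_cast; ring
    have e2 : poch (N+1) (j+l) * poch (N+1+j+l) (m-1-j) = poch (N+1) (m-1+l) := by
      rw [show m-1+l = (j+l) + (m-1-j) by omega, poch_add _ (j+l)]; congr 2; push_cast; ring
    have e3 : poch (N+m) l / poch (N+1) (j+l) = (poch (N+1) (m-1))⁻¹ * poch (N+1+j+l) (m-1-j) := by
      field_simp
      rw [mul_comm, e1, ← e2]
    rw [e3]; ring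
  rw [Finset.sum_congr rfl this, ← Finset.mul_sum, sum_poly_zero, mul_zero]
  refine lt_of_le_of_lt Polynomial.natDegree_mul_le ?_
  rw [pochP_deg, pochP_deg]; omega

lemma inner_diag (K N : ℂ) (hK : ∀ i : ℕ, K + i ≠ 0) (m : ℕ)
    (hN : ∀ i ≤ m + m, N + i ≠ 0) :
    ∑ l ∈ Finset.range (m+1), Bc K N m l * (poch K (m+l) / poch (N+1) (m+l)) =
      m.factorial * poch (K - N - m) m / poch (N+1) (2*m) := by
  have hNm : N + m ≠ 0 := hN m (by omega)
  have hne2 : poch (N+1) m ≠ 0 := poch_ne fun i hi => by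
      have := hN (i+1) (by omega); push_cast at this; convert this using 1; ring
  have hx : ∀ i ≤ m, N + m + (i:ℂ) ≠ 0 := fun i hi => by
    have := hN (m+i) (by omega); push_cast at this; convert this using 1; ring
  have hne3 : poch (N+m+1) m ≠ 0 := poch_ne fun i hi => by
      have := hx (i+1) (by omega); push_cast at this; convert this using 1; ring
  have : ∀ l ∈ Finset.range (m+1), Bc K N m l * (poch K (m+l) / poch (N+1) (m+l)) =
      ((N+m)/ poch (N+1) m) * ((-1:ℂ)^l * m.choose l * ((pochP K m).eval (l:ℂ) / (N + m + l))) := by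
    intro l hl
    have hl' : l ≤ m := by have := Finset.mem_range.1 hl; omega
    rw [Bc_term K N hK, pochP_eval]
    have hxl := hx l hl'
    have e1 : poch (N+m) l * (N+m+l) = (N+m) * poch (N+m+1) l := by
      rw [← poch_succ, poch_succ']
    have hne : poch (N+m+1) l ≠ 0 := poch_ne fun i hi => by
      have := hx (i+1) (by omega); push_cast at this; convert this using 1; ring
    have e3 : poch (N+m) l / poch (N+1) (m+l) = ((N+m)/ poch (N+1) m) / (N+m+l) := by
      rw [poch_add, show N + 1 + m = N + m + 1 by ring]
      field_simp
      rw [e1]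
    rw [e3]; ring
  rw [Finset.sum_congr rfl this, ← Finset.mul_sum, sum_poly_div _ _ (pochP_deg _ _).le _ hx,
    pochP_eval, poch_succ', two_mul, poch_add, show K + -(N+m) = K - N - m by ring, show N + 1 + m = N + m + 1 by ring]
  field_simp

lemma Tsum_lt (K N : ℂ) (hK : ∀ i : ℕ, K + i ≠ 0) (n m : ℕ) (hnm : n < m)
    (hN : ∀ i ≤ n + m, N + i ≠ 0) : Tsum K N n m = 0 := by
  rw [Tsum]
  refine Finset.sum_eq_zero fun j hj => ?_
  have hj' : j ≤ n := by have := Finset.mem_range.1 hj; omega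
  simp_rw [mul_assoc]
  rw [← Finset.mul_sum, inner_zero K N hK m j (by omega) (fun i hi => hN i (by omega)), mul_zero]

lemma Tsum_eq (K N : ℂ) (hK : ∀ i : ℕ, K + i ≠ 0) (n m : ℕ) 
    (hN : ∀ i ≤ n + m, N + i ≠ 0) : Tsum K N n m = (if n = m then 1 else 0) * 
      ((n.factorial : ℂ) * poch (N + n) n * poch (1 - K + N) n / (poch K n * poch (N+1) (2*n))) := by
  rcases lt_trichotomy n m with h | h | h
  · rw [Tsum_lt K N hK n m h hN, if_neg h.ne]; simp
  · subst h
    rw [Tsum, Finset.sum_range_succ, Finset.sum_eq_zero, zero_add]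
    · simp_rw [mul_assoc (Bc K N n n)]
      rw [← Finset.mul_sum, inner_diag K N hK n hN, Bc, poch_neg_nat, poch_refl]
      have : ((-1:ℂ)^n)*(-1)^n = 1 := by rw [← mul_pow]; simp
      have h2 : (n.factorial : ℂ) ≠ 0 := by exact_mod_cast n.factorial_ne_zero
      rw [show 1 - K + N = 1 - (K - N) by ring]
      simp only [Nat.choose_self, Nat.cast_one, if_true]
      have h1 : poch K n ≠ 0 := poch_ne fun i _ => hK i
      field_simp
      linear_combination (poch (N+n) n * poch (1-(K-N)) n / poch (N+1) (2*n)) * this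
    · intro j hj
      simp_rw [mul_assoc]
      have := Finset.mem_range.1 hj
      rw [← Finset.mul_sum, inner_zero K N hK n j (by omega) (fun i hi => hN i (by omega)), mul_zero]
  · rw [Tsum_symm, Tsum_lt K N hK m n h (fun i hi => hN i (by omega)), if_neg h.ne']; simp

lemma Bc_conj (k₁ k₂ : ℝ) (m l : ℕ) :
    conj (Bc (2 * (k₂:ℂ)) (2 * (k₂:ℂ) - 2 * k₁ + 1) m l) = Bc (2 * (k₂:ℂ)) (2 * (k₂:ℂ) - 2 * k₁ + 1) m l := by
  have h2 : (starRingEnd ℂ) 2 = 2 := Complex.conj_ofNat 2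
  simp [Bc, poch_conj, h2]

lemma F32_term (A C D E : ℂ) (n : ℕ) : F32 A (-(n:ℂ)) C D E 1 =
    ∑ j ∈ Finset.range (n+1), poch A j * poch (-(n:ℂ)) j * poch C j / (poch D j * poch E j) / j.factorial := by
  rw [F32, pFq, tsum_eq_sum (s := Finset.range (n+1))]
  · refine Finset.sum_congr rfl fun j _ => ?_
    simp [mul_assoc]
  · intro j hj
    have : n < j := by simpa [Nat.lt_succ_iff] using hj
    simp [poch_neg_nat, Nat.choose_eq_zero_of_lt this]

lemma phiC_eq (k₁ k₂ t φ : ℝ) (hk₁ : 0 < k₁) (n : ℕ) (x : ℝ) (hx : t + x ≠ 0) :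
    phiC k₁ k₂ t φ (rhoD k₁ k₂ n) (x:ℂ) = 
      Complex.exp (((Real.pi - 2 * φ) * x : ℝ) : ℂ) /
        (Complex.Gamma (k₁ + I * t + I * x) * conj (Complex.Gamma (k₁ + I * t + I * x))) *
      ∑ j ∈ Finset.range (n+1), Bc (2 * (k₂:ℂ)) (2 * (k₂:ℂ) - 2 * k₁ + 1) n j /
        poch ((k₂ : ℂ) - (k₁ : ℂ) + I * t + 1) j * poch (conj ((k₂:ℂ) + I * x)) j := by
  have hz : conj (Complex.Gamma (k₁ + I * t + I * x)) = Complex.Gamma (k₁ - I * t - I * x) := by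
    rw [← Complex.Gamma_conj]; congr 1; simp; ring
  set z : ℂ := k₁ - I * t - I * x with hzdef
  have hpi : (Real.pi : ℂ) ≠ 0 := by exact_mod_cast Real.pi_ne_zero
  have hsin : Complex.sin (Real.pi * z) ≠ 0 := by
    rw [Ne, Complex.sin_eq_zero_iff]
    rintro ⟨k, hk⟩
    have h1 : z = k := by
      rw [mul_comm] at hk
      exact mul_right_cancel₀ hpi hk
    have h2 := congrArg Complex.im h1
    simp [hzdef] at h2
    apply hx; linarith
  have hG : Complex.Gamma z ≠ 0 := Complex.Gamma_ne_zero_of_re_pos (by simpa [hzdef] using hk₁)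
  have hrefl := Complex.Gamma_mul_Gamma_one_sub z
  have h1z : (1 - (k₁ : ℂ) + I * t + I * x) = 1 - z := by rw [hzdef]; ring
  have hpp : Complex.exp (-2 * (φ : ℂ) * x) * pper k₁ t x * Complex.Gamma (1 - (k₁ : ℂ) + I * t + I * x)
      = Complex.exp (((Real.pi - 2 * φ) * x : ℝ) : ℂ) / Complex.Gamma z := by
    rw [h1z, pper, ← hzdef]
    have : Complex.exp (((Real.pi - 2 * φ) * x : ℝ) : ℂ) = Complex.exp (-2 * (φ : ℂ) * x) * Complex.exp (Real.pi * x) := by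
      rw [← Complex.exp_add]; congr 1; push_cast; ring
    rw [this]
    rw [eq_div_iff hsin] at hrefl
    rw [eq_div_iff hG, one_div]
    linear_combination (Complex.exp (-2 * (φ : ℂ) * x) * Complex.exp (Real.pi * x) * (Real.pi : ℂ)⁻¹) * hrefl +
      (Complex.exp (-2 * (φ : ℂ) * x) * Complex.exp (Real.pi * x)) * (inv_mul_cancel₀ hpi)
  have hF : F32 ((k₂ : ℂ) - I * x) ((k₂ : ℂ) - (k₁ : ℂ) + 1/2 + I * rhoD k₁ k₂ n)
      ((k₂ : ℂ) - (k₁ : ℂ) + 1/2 - I * rhoD k₁ k₂ n) (2 * (k₂ : ℂ)) ((k₂ : ℂ) - (k₁ : ℂ) + I * t + 1) 1 =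
      ∑ j ∈ Finset.range (n+1), Bc (2 * (k₂:ℂ)) (2 * (k₂:ℂ) - 2 * k₁ + 1) n j /
        poch ((k₂ : ℂ) - (k₁ : ℂ) + I * t + 1) j * poch (conj ((k₂:ℂ) + I * x)) j := by
    have hr : I * rhoD k₁ k₂ n = -((k₂ : ℂ) - k₁ + 1/2 + n) := by
      rw [rhoD, ← mul_assoc, Complex.I_mul_I]; ring
    rw [hr, show (k₂ : ℂ) - (k₁ : ℂ) + 1/2 + -((k₂ : ℂ) - k₁ + 1/2 + n) = -(n:ℂ) by ring,
      show (k₂ : ℂ) - (k₁ : ℂ) + 1/2 - -((k₂ : ℂ) - k₁ + 1/2 + n) = 2 * (k₂:ℂ) - 2 * k₁ + 1 + n by ring,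
      F32_term]
    refine Finset.sum_congr rfl fun j _ => ?_
    rw [show conj ((k₂:ℂ) + I * x) = (k₂ : ℂ) - I * x by simp; ring, Bc]
    simp only [div_eq_mul_inv, mul_inv]
    ring
  rw [phiC, hF, hz, show (k₁ : ℂ) + I * x + I * t = k₁ + I * t + I * x by ring, ← mul_div_assoc, hpp]
  congr 1
  rw [div_div, mul_comm (Complex.Gamma z)]

lemma Gamma_shift {v : ℂ} (l : ℕ) (h : (l:ℝ) < v.re) :
    poch (1 - v) l ≠ 0 ∧ (Complex.Gamma (v - l))⁻¹ = (-1)^l * poch (1 - v) l / Complex.Gamma v ∧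
    Complex.Gamma (v - l) = (-1)^l * Complex.Gamma v / poch (1 - v) l := by
  have h0 : 0 < (v - l).re := by simpa using h
  have h1 := poch_Gamma h0 l
  rw [poch_refl, sub_add_cancel] at h1
  have hv : Complex.Gamma v ≠ 0 := Complex.Gamma_ne_zero_of_re_pos (lt_of_le_of_lt (by positivity) h)
  have hvl := Complex.Gamma_ne_zero_of_re_pos h0
  have hp : poch (1 - v) l ≠ 0 := by
    intro h; rw [h] at h1; simp at h1; exact hv h1
  have hs : ((-1:ℂ)^l)*(-1)^l = 1 := by rw [← mul_pow]; simp
  refine ⟨hp, ?_, ?_⟩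
  · field_simp; rw [h1]; ring
  · field_simp; rw [h1]; linear_combination (-(poch (1-v) l) * Complex.Gamma (v - l)) * hs

/-- the Beta integrals occurring in the expansion -/
def Rf (k₁ k₂ t : ℝ) (l : ℕ) (x : ℝ) : ℂ :=
  Complex.betaIntegral (((k₂ + l : ℝ) : ℂ) + I * x) (k₁ + I * t - k₂ - l)

lemma Rf_eq (k₁ k₂ t : ℝ) (hk₂ : 0 < k₂) (m l : ℕ) (K N : ℂ)
    (hl : k₂ + l < k₁) (x : ℝ) :
    Bc K N m l / poch (conj ((k₂ : ℂ) - (k₁ : ℂ) + I * t + 1)) l * poch ((k₂:ℂ) + I * x) l *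
      Complex.Gamma ((k₂:ℂ) + I * x) / Complex.Gamma (k₁ + I * t + I * x) =
    Bc K N m l * (-1)^l / Complex.Gamma (k₁ + I * t - k₂) * Rf k₁ k₂ t l x := by
  have hre : ((k₁:ℂ) + I * t - k₂).re = k₁ - k₂ := by simp
  obtain ⟨hp, -, hG⟩ := Gamma_shift (v := (k₁:ℂ) + I * t - k₂) l (by rw [hre]; linarith)
  have he : conj ((k₂ : ℂ) - (k₁ : ℂ) + I * t + 1) = 1 - ((k₁:ℂ) + I * t - k₂) := by
    simp; ring
  have hk1 : 0 < k₁ := by have : (0:ℝ) ≤ l := by positivity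
                          linarith
  have hv : Complex.Gamma ((k₁:ℂ) + I * t - k₂) ≠ 0 := Complex.Gamma_ne_zero_of_re_pos (by
    rw [hre]; have : (0:ℝ) ≤ l := by positivity
    linarith)
  have hs : ((-1:ℂ)^l)*(-1)^l = 1 := by rw [← mul_pow]; simp
  rw [he, Rf, Complex.betaIntegral_eq_Gamma_mul_div, hG]
  · rw [show ((k₂ + l : ℝ) : ℂ) + I * x = ((k₂:ℂ) + I * x) + l by push_cast; ring,
      poch_Gamma (by simpa using hk₂),
      show (k₂:ℂ) + I * x + l + (k₁ + I * t - k₂ - l) = k₁ + I * t + I * x by ring]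
    have hC : Complex.Gamma (k₁ + I * t + I * x) ≠ 0 := Complex.Gamma_ne_zero_of_re_pos (by simpa using hk1)
    field_simp
    linear_combination (-Bc K N m l * poch (k₂ + I * x) l * Complex.Gamma (k₂ + I * x)) * hs
  · simp; positivity
  · simp; linarith

lemma integrand_eq (k₁ k₂ t φ : ℝ) (hk₁ : 0 < k₁) (hk₂ : 0 < k₂) (n m : ℕ) (hn : k₂ - k₁ + 1/2 + n < 0)
    (hm : k₂ - k₁ + 1/2 + m < 0) (x : ℝ) (hx : t + x ≠ 0) :
    phiC k₁ k₂ t φ (rhoD k₁ k₂ n) (x : ℂ) *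
        conj (phiC k₁ k₂ t φ (rhoD k₁ k₂ m) (x : ℂ)) * wfun k₁ k₂ t φ (x : ℂ) =
    ∑ j ∈ Finset.range (n+1), ∑ l ∈ Finset.range (m+1), 
      (((1 / (2 * Real.pi) : ℝ) : ℂ) * Complex.exp (((2 * t * (φ - Real.pi / 2) : ℝ) : ℂ)) *
      (Bc (2 * (k₂:ℂ)) (2 * (k₂:ℂ) - 2 * k₁ + 1) n j * Bc (2 * (k₂:ℂ)) (2 * (k₂:ℂ) - 2 * k₁ + 1) m l * (-1)^(j+l) /
        (Complex.Gamma (k₁ + I * t - k₂) * conj (Complex.Gamma (k₁ + I * t - k₂))))) * 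
      (Rf k₁ k₂ t l x * conj (Rf k₁ k₂ t j x)) := by
  rw [phiC_eq k₁ k₂ t φ hk₁ n x hx, phiC_eq k₁ k₂ t φ hk₁ m x hx]
  set K : ℂ := 2 * (k₂:ℂ) with hK
  set N : ℂ := 2 * (k₂:ℂ) - 2 * k₁ + 1 with hN
  set e : ℂ := (k₂ : ℂ) - (k₁ : ℂ) + I * t + 1 with he
  set u : ℂ := (k₂:ℂ) + I * x with hu
  set C : ℂ := k₁ + I * t + I * x with hC
  have hGC : Complex.Gamma C ≠ 0 := Complex.Gamma_ne_zero_of_re_pos (by simpa [hC] using hk₁)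
  have hGC' : conj (Complex.Gamma C) ≠ 0 := by simpa using hGC
  have hw : wfun k₁ k₂ t φ (x:ℂ) = ((1 / (2 * Real.pi) : ℝ) : ℂ) *
      Complex.exp ((2 * x + (t : ℂ)) * (2 * (φ : ℂ) - (Real.pi : ℂ))) *
      Complex.Gamma C * conj (Complex.Gamma C) * Complex.Gamma u * conj (Complex.Gamma u) := by
    rw [wfun, ← Complex.Gamma_conj, ← Complex.Gamma_conj]
    congr 3
    · congr 1; simp [hC]; ring
    · simp [hu]; ring
  have hexp : Complex.exp (((Real.pi - 2 * φ) * x : ℝ) : ℂ) * Complex.exp (((Real.pi - 2 * φ) * x : ℝ) : ℂ) *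
      Complex.exp ((2 * x + (t : ℂ)) * (2 * (φ : ℂ) - (Real.pi : ℂ))) = 
      Complex.exp (((2 * t * (φ - Real.pi / 2) : ℝ) : ℂ)) := by
    rw [← Complex.exp_add, ← Complex.exp_add]; congr 1; push_cast; ring
  have hce : conj (Complex.exp (((Real.pi - 2 * φ) * x : ℝ) : ℂ)) = Complex.exp (((Real.pi - 2 * φ) * x : ℝ) : ℂ) := by
    rw [← Complex.exp_conj, Complex.conj_ofReal]
  have hS2 : (∑ l ∈ Finset.range (m+1), conj (Bc K N m l / poch e l * poch (conj u) l)) *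
      Complex.Gamma u / Complex.Gamma C = ∑ l ∈ Finset.range (m+1), 
        Bc K N m l * (-1)^l / Complex.Gamma (k₁ + I * t - k₂) * Rf k₁ k₂ t l x := by
    rw [Finset.sum_mul, Finset.sum_div]
    refine Finset.sum_congr rfl fun l hl => ?_
    have hl' : (l:ℝ) ≤ m := by have := Finset.mem_range.1 hl; exact_mod_cast (by omega : l ≤ m)
    rw [← Rf_eq k₁ k₂ t hk₂ m l K N (by linarith) x, map_mul, map_div₀, Bc_conj, poch_conj, poch_conj, Complex.conj_conj]
  have hS1 : (∑ j ∈ Finset.range (n+1), (Bc K N n j / poch e j * poch (conj u) j)) *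
      conj (Complex.Gamma u) / conj (Complex.Gamma C) = ∑ j ∈ Finset.range (n+1), 
        conj (Bc K N n j * (-1)^j / Complex.Gamma (k₁ + I * t - k₂) * Rf k₁ k₂ t j x) := by
    rw [Finset.sum_mul, Finset.sum_div]
    refine Finset.sum_congr rfl fun l hl => ?_
    have hl' : (l:ℝ) ≤ n := by have := Finset.mem_range.1 hl; exact_mod_cast (by omega : l ≤ n)
    rw [← Rf_eq k₁ k₂ t hk₂ n l K N (by linarith) x, map_div₀, map_mul, map_mul, map_div₀, Bc_conj, poch_conj, poch_conj, Complex.conj_conj]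
  rw [hw, map_mul, map_div₀, map_mul, Complex.conj_conj, hce, map_sum, ← hexp]
  trans ((1 / (2 * Real.pi) : ℝ) : ℂ) * (Complex.exp (((Real.pi - 2 * φ) * x : ℝ) : ℂ) * Complex.exp (((Real.pi - 2 * φ) * x : ℝ) : ℂ) *
      Complex.exp ((2 * x + (t : ℂ)) * (2 * (φ : ℂ) - (Real.pi : ℂ)))) *
      (((∑ j ∈ Finset.range (n+1), (Bc K N n j / poch e j * poch (conj u) j)) *
      conj (Complex.Gamma u) / conj (Complex.Gamma C)) * 
      ((∑ l ∈ Finset.range (m+1), conj (Bc K N m l / poch e l * poch (conj u) l)) *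
      Complex.Gamma u / Complex.Gamma C))
  · field_simp
  · rw [hS1, hS2, Finset.sum_mul_sum, Finset.mul_sum]
    refine Finset.sum_congr rfl fun j _ => ?_
    rw [Finset.mul_sum]
    refine Finset.sum_congr rfl fun l _ => ?_
    simp only [map_mul, map_div₀, map_pow, map_neg, map_one, hK, hN, Bc_conj]
    rw [pow_add]
    simp only [div_eq_mul_inv, mul_inv]
    ring

lemma Rf_int (k₁ k₂ t : ℝ) (hk₂ : 0 < k₂) (j l : ℕ) (hj : k₂ - k₁ + 1/2 + j < 0)
    (hl : k₂ - k₁ + 1/2 + l < 0) :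
    Integrable (fun x => Rf k₁ k₂ t l x * conj (Rf k₁ k₂ t j x)) ∧
    ∫ x, Rf k₁ k₂ t l x * conj (Rf k₁ k₂ t j x) = 2 * Real.pi *
      (Complex.Gamma (2 * (k₂ : ℂ)) * Complex.Gamma (2 * (k₁ : ℂ) - 2 * k₂ - 1) / Complex.Gamma (2 * (k₁ : ℂ) - 1) * 
        ((-1)^(j+l) * (poch (2 * (k₂:ℂ)) (j+l) / poch (2 * (k₂:ℂ) - 2 * k₁ + 1 + 1) (j+l)))) := by
  have hl0 : (0:ℝ) ≤ l := by positivity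
  have hj0 : (0:ℝ) ≤ j := by positivity
  have h := barnes (a := k₂ + l) (b := k₂ + j) (v := k₁ + I * t - k₂ - l) (v' := k₁ + I * t - k₂ - j)
    (by linarith) (by linarith) (by simp; linarith) (by simp; linarith)
  refine ⟨h.1, h.2.trans ?_⟩
  rw [show ((k₂ + l : ℝ) : ℂ) + ((k₂ + j : ℝ) : ℂ) = 2 * (k₂:ℂ) + (j + l : ℕ) by push_cast; ring,
    show (k₁:ℂ) + I * t - k₂ - l + conj ((k₁:ℂ) + I * t - k₂ - j) - 1 = 2 * (k₁ : ℂ) - 2 * k₂ - 1 - (j + l : ℕ) by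
      simp; ring]
  obtain ⟨hp, -, hG⟩ := Gamma_shift (v := 2 * (k₁ : ℂ) - 2 * k₂ - 1) (j+l) (by simp; linarith)
  rw [Complex.betaIntegral_eq_Gamma_mul_div, hG, poch_Gamma (by simpa using hk₂),
    show 2 * (k₂:ℂ) + (j + l : ℕ) + (2 * (k₁ : ℂ) - 2 * k₂ - 1 - (j + l : ℕ)) = 2 * (k₁:ℂ) - 1 by ring,
    show 2 * (k₂:ℂ) - 2 * k₁ + 1 + 1 = 1 - (2 * (k₁ : ℂ) - 2 * k₂ - 1) by ring]
  · simp only [div_eq_mul_inv]; ring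
  · simp; linarith
  · simp; linarith

/-- Orthogonality relations for the continuous Hahn functions at the discrete mass points:
`∫ φ_{ρ_n}(x) φ_{ρ_m}*(x) w(x) dx = δ_{nm} ⋅ (explicit constant)`. -/
theorem discrete_orthogonality (k₁ k₂ : ℝ) (hk₁ : 0 < k₁) (hk₂ : 0 < k₂)
    (hneg : k₂ - k₁ + 1/2 < 0) (t : ℝ)
    (φ : ℝ) (hφ₀ : 0 < φ) (hφπ : φ < Real.pi)
    (n m : ℕ) (hn : k₂ - k₁ + 1/2 + n < 0) (hm : k₂ - k₁ + 1/2 + m < 0) :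
    (∫ x : ℝ, phiC k₁ k₂ t φ (rhoD k₁ k₂ n) (x : ℂ) *
        conj (phiC k₁ k₂ t φ (rhoD k₁ k₂ m) (x : ℂ)) * wfun k₁ k₂ t φ (x : ℂ)) =
      (if n = m then 1 else 0) *
        (Complex.exp (((2 * t * (φ - Real.pi / 2) : ℝ) : ℂ)) *
          (Complex.Gamma (2 * (k₂ : ℂ)) * Complex.Gamma (2 * (k₁ : ℂ) - 2 * k₂ - 1) /
            (Complex.Gamma ((k₁ : ℂ) - k₂ + I * t) * Complex.Gamma ((k₁ : ℂ) - k₂ - I * t) *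
              Complex.Gamma (2 * (k₁ : ℂ) - 1))) *
          ((n.factorial : ℂ) * poch (2 * (k₂ : ℂ) - 2 * k₁ + n + 1) n *
              poch (2 - 2 * (k₁ : ℂ)) n) /
            (poch (2 * (k₂ : ℂ)) n * poch (2 * (k₂ : ℂ) - 2 * k₁ + 2) (2 * n))) := by
  have hae : ∀ᵐ x : ℝ, t + x ≠ 0 := by
    have : ∀ᵐ x : ℝ, x ≠ -t := by simp [ae_iff]
    filter_upwards [this] with x hx h
    apply hx; linarith
  rw [integral_congr_ae (hae.mono fun x hx => integrand_eq k₁ k₂ t φ hk₁ hk₂ n m hn hm x hx)]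
  have hj : ∀ j ∈ Finset.range (n+1), k₂ - k₁ + 1/2 + j < 0 := fun j hj => by
    have : (j:ℝ) ≤ n := by have := Finset.mem_range.1 hj; exact_mod_cast (by omega : j ≤ n)
    linarith
  have hl : ∀ l ∈ Finset.range (m+1), k₂ - k₁ + 1/2 + l < 0 := fun j hj => by
    have : (j:ℝ) ≤ m := by have := Finset.mem_range.1 hj; exact_mod_cast (by omega : j ≤ m)
    linarith
  rw [integral_finsetSum _ fun j hj' => integrable_finsetSum _ fun l hl' =>
    (Rf_int k₁ k₂ t hk₂ j l (hj j hj') (hl l hl')).1.const_mul _]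
  have hT := Tsum_eq (2 * (k₂:ℂ)) (2 * (k₂:ℂ) - 2 * k₁ + 1) (fun i h => by
      have := congrArg Complex.re h
      simp at this
      have : (0:ℝ) ≤ i := by positivity
      linarith) n m (fun i hi h => by
      have := congrArg Complex.re h
      simp at this
      have : (i:ℝ) ≤ n + m := by exact_mod_cast hi
      linarith)
  have hv : Complex.Gamma ((k₁ : ℂ) - k₂ - I * t) = conj (Complex.Gamma (k₁ + I * t - k₂)) := by
    rw [← Complex.Gamma_conj]; congr 1; simp; ring
  have hv2 : (k₁ : ℂ) - k₂ + I * t = k₁ + I * t - k₂ := by ring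
  trans Complex.exp (((2 * t * (φ - Real.pi / 2) : ℝ) : ℂ)) *
          (Complex.Gamma (2 * (k₂ : ℂ)) * Complex.Gamma (2 * (k₁ : ℂ) - 2 * k₂ - 1) /
            (Complex.Gamma ((k₁ : ℂ) - k₂ + I * t) * Complex.Gamma ((k₁ : ℂ) - k₂ - I * t) *
              Complex.Gamma (2 * (k₁ : ℂ) - 1))) * Tsum (2 * (k₂:ℂ)) (2 * (k₂:ℂ) - 2 * k₁ + 1) n m
  · rw [Tsum, Finset.mul_sum]
    refine Finset.sum_congr rfl fun j hj' => ?_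
    rw [integral_finsetSum _ fun l hl' =>
      (Rf_int k₁ k₂ t hk₂ j l (hj j hj') (hl l hl')).1.const_mul _, Finset.mul_sum]
    refine Finset.sum_congr rfl fun l hl' => ?_
    rw [integral_const_mul, (Rf_int k₁ k₂ t hk₂ j l (hj j hj') (hl l hl')).2, hv, hv2]
    have hs : ((-1:ℂ)^(j+l))*(-1)^(j+l) = 1 := by rw [← mul_pow]; simp
    have hpi : ((1 / (2 * Real.pi) : ℝ) : ℂ) * (2 * Real.pi) = 1 := by
      have : (Real.pi : ℂ) ≠ 0 := by exact_mod_cast Real.pi_ne_zero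
      push_cast; field_simp
    generalize ((1 / (2 * Real.pi) : ℝ) : ℂ) = p at hpi ⊢
    generalize (2 * (Real.pi:ℂ)) = q at hpi ⊢
    generalize ((-1:ℂ)^(j+l)) = s at hs ⊢
    simp only [div_eq_mul_inv, mul_inv]
    generalize (conj (Complex.Gamma (k₁ + I * t - k₂)))⁻¹ = g1
    generalize (Complex.Gamma (k₁ + I * t - k₂))⁻¹ = g2
    trans (p * q) * (s * s) * (Complex.exp (((2 * t * (φ - Real.pi * 2⁻¹) : ℝ) : ℂ)) *
      (Complex.Gamma (2 * (k₂ : ℂ)) * Complex.Gamma (2 * (k₁ : ℂ) - 2 * k₂ - 1) *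
            (g2 * g1 * (Complex.Gamma (2 * (k₁ : ℂ) - 1))⁻¹)) *
      (Bc (2 * (k₂:ℂ)) (2 * (k₂:ℂ) - 2 * k₁ + 1) n j * Bc (2 * (k₂:ℂ)) (2 * (k₂:ℂ) - 2 * k₁ + 1) m l *
       (poch (2 * (k₂:ℂ)) (j+l) * (poch (2 * (k₂:ℂ) - 2 * k₁ + 1 + 1) (j+l))⁻¹)))
    · ring
    · rw [hpi, hs]; ring
  · rw [hT, show 2 * (k₂:ℂ) - 2 * k₁ + 1 + n = 2 * (k₂ : ℂ) - 2 * k₁ + n + 1 by ring,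
      show 1 - 2 * (k₂:ℂ) + (2 * (k₂:ℂ) - 2 * k₁ + 1) = 2 - 2 * (k₁ : ℂ) by ring,
      show 2 * (k₂:ℂ) - 2 * k₁ + 1 + 1 = 2 * (k₂ : ℂ) - 2 * k₁ + 2 by ring]
    ring
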